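/- For every x ∈ X̂ and r > 0 one has the inclusions B̂(x, r/4) ⊂ B_a(x,r) ⊂ B̂(x,r). -/

import Mathlib

open Metric Set MeasureTheory Filter
open scoped ENNReal NNReal

noncomputable section

variable {X : Type*}

/-- The quasimetric `d_a` on the sphericalization `X̂ = X ∪ {∞}`, with `none` playing
the role of the point `∞`. -/
noncomputable def sphDist [MetricSpace X] (a : X) : Option X → Option X → ℝ
  | some x, some y => dist x y / ((1 + dist x a) * (1 + dist y a))
  | some x, none => 1 / (1 + dist x a)
  | none, some y => 1 / (1 + dist y a)
  | none, none => 0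

/-- The sum `Σ_{j=1}^k d_a(x_{j-1}, x_j)` along a finite sequence (list) in `X̂`. -/
noncomputable def chainSum [MetricSpace X] (a : X) : List (Option X) → ℝ
  | [] => 0
  | [_] => 0
  | x :: y :: l => sphDist a x y + chainSum a (y :: l)

/-- The sphericalized distance `d̂(x,y) = inf Σ_{j=1}^k d_a(x_{j-1},x_j)`, the infimum
being taken over all finite sequences `x = x_0, x_1, …, x_k = y` in `X̂`. -/
noncomputable def sphHatDist [MetricSpace X] (a : X) (x y : Option X) : ℝ :=
  sInf {s : ℝ | ∃ L : List (Option X),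
    L.head? = some x ∧ L.getLast? = some y ∧ chainSum a L = s}

/-- `d̂(x) = d̂(x,∞) = 1/(1+|x|)` for `x ∈ X`. -/
noncomputable def sphD [MetricSpace X] (a x : X) : ℝ := 1 / (1 + dist x a)

/-- The weight `1/(1+|x|)`, extended by `0` at `∞`. -/
noncomputable def sphWeight [MetricSpace X] (a : X) : Option X → ℝ
  | some x => sphD a x
  | none => 0

lemma sphD_pos [MetricSpace X] (a x : X) : 0 < sphD a x := by
  unfold sphD
  positivity

lemma sphDist_some_some [MetricSpace X] (a x y : X) :
    sphDist a (some x) (some y) = dist x y * (sphD a x * sphD a y) := by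
  simp only [sphDist, sphD]
  field_simp

lemma dist_mul_sphD [MetricSpace X] (a x : X) : dist x a * sphD a x = 1 - sphD a x := by
  have h : 1 + dist x a ≠ 0 := by positivity
  unfold sphD
  field_simp
  ring

lemma sphWeight_nonneg [MetricSpace X] (a : X) (x : Option X) : 0 ≤ sphWeight a x := by
  cases x with
  | none => exact le_rfl
  | some x => exact (sphD_pos a x).le

lemma sphDist_nonneg [MetricSpace X] (a : X) (x y : Option X) : 0 ≤ sphDist a x y := by
  cases x <;> cases y <;> simp only [sphDist] <;> positivity

lemma sphDist_comm [MetricSpace X] (a : X) (x y : Option X) :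
    sphDist a x y = sphDist a y x := by
  cases x <;> cases y <;> simp only [sphDist]
  rw [dist_comm, mul_comm]

lemma sphWeight_le_add_sphDist [MetricSpace X] (a : X) (x y : Option X) :
    sphWeight a x ≤ sphWeight a y + sphDist a x y := by
  cases x with
  | none => exact add_nonneg (sphWeight_nonneg a y) (sphDist_nonneg a none y)
  | some x =>
    cases y with
    | none => simp [sphWeight, sphDist, sphD]
    | some y =>
      rw [sphDist_some_some]
      simp only [sphWeight]
      have htri : dist y a ≤ dist x y + dist x a := by
        rw [dist_comm x y]
        exact dist_triangle y x a
      have hmul := mul_le_mul_of_nonneg_right htri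
        (mul_pos (sphD_pos a x) (sphD_pos a y)).le
      linear_combination hmul + sphD a y * dist_mul_sphD a x - sphD a x * dist_mul_sphD a y

lemma sphDist_le_sphWeight_add [MetricSpace X] (a : X) (x y : Option X) :
    sphDist a x y ≤ sphWeight a x + sphWeight a y := by
  cases x with
  | none => cases y <;> simp [sphWeight, sphDist, sphD]
  | some x =>
    cases y with
    | none => simp [sphWeight, sphDist, sphD]
    | some y =>
      rw [sphDist_some_some]
      simp only [sphWeight]
      have hpos := mul_pos (sphD_pos a x) (sphD_pos a y)
      have hmul := mul_le_mul_of_nonneg_right (dist_triangle_right x y a) hpos.le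
      linear_combination hmul + 2 * hpos + sphD a y * dist_mul_sphD a x
        + sphD a x * dist_mul_sphD a y

lemma chainSum_nonneg [MetricSpace X] (a : X) (L : List (Option X)) : 0 ≤ chainSum a L := by
  induction L with
  | nil => exact le_rfl
  | cons x l ih =>
    cases l with
    | nil => exact le_rfl
    | cons y l => exact add_nonneg (sphDist_nonneg a x y) ih

lemma sphWeight_getLast_le [MetricSpace X] (a : X) (l : List (Option X)) (x y : Option X)
    (hy : (x :: l).getLast? = some y) :
    sphWeight a y ≤ sphWeight a x + chainSum a (x :: l) := by
  induction l generalizing x with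
  | nil =>
    obtain rfl : x = y := by simpa using hy
    simp [chainSum]
  | cons z l ih =>
    have hz := ih z (by simpa using hy)
    have hzx := sphWeight_le_add_sphDist a z x
    rw [sphDist_comm] at hzx
    simp only [chainSum]
    linarith

lemma exists_some_of_sphWeight_pos [MetricSpace X] {a : X} {x : Option X}
    (h : 0 < sphWeight a x) : ∃ x', x = some x' := by
  cases x with
  | none => exact absurd h (lt_irrefl _)
  | some x' => exact ⟨x', rfl⟩

/-- A chain that is short compared with the weight of one of its endpoints stays in `X`, and
its length controls the distance between the endpoints. -/
lemma sq_mul_dist_le_chainSum [MetricSpace X] (a : X) {c : ℝ} (hc : 0 < c)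
    (l : List (Option X)) (x y : Option X) (hy : (x :: l).getLast? = some y)
    (h : c + chainSum a (x :: l) ≤ sphWeight a x ∨ c + chainSum a (x :: l) ≤ sphWeight a y) :
    ∃ x' y', x = some x' ∧ y = some y' ∧ c ^ 2 * dist x' y' ≤ chainSum a (x :: l) := by
  have hx : c ≤ sphWeight a x := by
    have hlast := sphWeight_getLast_le a l x y hy
    have hsum := chainSum_nonneg a (x :: l)
    rcases h with h | h <;> linarith
  obtain ⟨x', rfl⟩ := exists_some_of_sphWeight_pos (hc.trans_le hx)
  induction l generalizing x' with
  | nil =>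
    obtain rfl : some x' = y := by simpa using hy
    exact ⟨x', x', rfl, rfl, by simp [chainSum]⟩
  | cons z l ih =>
    have hlast : (z :: l).getLast? = some y := by simpa using hy
    have hstep := sphWeight_le_add_sphDist a (some x') z
    have hdist := sphDist_nonneg a (some x') z
    have hsum := chainSum_nonneg a (z :: l)
    have hzy := sphWeight_getLast_le a l z y hlast
    simp only [chainSum] at h ⊢
    have hz : c ≤ sphWeight a z := by rcases h with h | h <;> linarith
    obtain ⟨z', rfl⟩ := exists_some_of_sphWeight_pos (hc.trans_le hz)
    obtain ⟨_, y', hz', rfl, hle⟩ := ih z' hlast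
      (h.imp (fun h => by linarith) (fun h => by linarith)) hz
    obtain rfl := Option.some.inj hz'
    refine ⟨x', y', rfl, rfl, ?_⟩
    have hedge : c ^ 2 * dist x' z' ≤ sphDist a (some x') (some z') := by
      rw [sphDist_some_some, mul_comm, sq]
      exact mul_le_mul_of_nonneg_left (mul_le_mul hx hz hc.le (hc.le.trans hx)) dist_nonneg
    have htri := mul_le_mul_of_nonneg_left (dist_triangle x' z' y') (sq_nonneg c)
    linarith

lemma sphDist_le_four_mul_chainSum [MetricSpace X] (a : X) (l : List (Option X))
    (x y : Option X) (hy : (x :: l).getLast? = some y) :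
    sphDist a x y ≤ 4 * chainSum a (x :: l) := by
  set m := max (sphWeight a x) (sphWeight a y)
  have hxm : sphWeight a x ≤ m := le_max_left _ _
  have hym : sphWeight a y ≤ m := le_max_right _ _
  by_cases hS : m / 2 ≤ chainSum a (x :: l)
  · linarith [sphDist_le_sphWeight_add a x y]
  · push Not at hS
    have hsum := chainSum_nonneg a (x :: l)
    have hmpos : 0 < m := by linarith
    obtain ⟨x', y', rfl, rfl, hle⟩ := sq_mul_dist_le_chainSum a (half_pos hmpos) l x y hy
      (le_max_iff.mp (by linarith))
    have hmul : sphD a x' * sphD a y' ≤ m * m :=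
      mul_le_mul hxm hym (sphD_pos a y').le hmpos.le
    rw [sphDist_some_some]
    have hdist := mul_le_mul_of_nonneg_left hmul (dist_nonneg (x := x') (y := y'))
    linarith

lemma sphHatDist_le_sphDist [MetricSpace X] (a : X) (x y : Option X) :
    sphHatDist a x y ≤ sphDist a x y := by
  refine csInf_le ⟨0, ?_⟩ ⟨[x, y], by simp, by simp, by simp [chainSum]⟩
  rintro _ ⟨L, -, -, rfl⟩
  exact chainSum_nonneg a L

lemma sphDist_div_four_le_sphHatDist [MetricSpace X] (a : X) (x y : Option X) :
    sphDist a x y / 4 ≤ sphHatDist a x y := by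
  refine le_csInf ⟨_, [x, y], by simp, by simp, rfl⟩ ?_
  rintro _ ⟨L, hx, hy, rfl⟩
  obtain ⟨l, rfl⟩ := List.head?_eq_some_iff.mp hx
  linarith [sphDist_le_four_mul_chainSum a l x y hy]

/-- For every `x ∈ X̂` and `r > 0` one has
`B̂(x, r/4) ⊂ B_a(x,r) ⊂ B̂(x,r)`. -/
theorem statement4 [MetricSpace X]
    (hX : ¬ Bornology.IsBounded (Set.univ : Set X)) (a : X)
    (x : Option X) (r : ℝ) (hr : 0 < r) :
    {y : Option X | sphHatDist a x y < r / 4} ⊆ {y : Option X | sphDist a x y < r} ∧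
    {y : Option X | sphDist a x y < r} ⊆ {y : Option X | sphHatDist a x y < r} := by
  refine ⟨fun y hy => ?_, fun y hy => (sphHatDist_le_sphDist a x y).trans_lt hy⟩
  simp only [Set.mem_ofPred_eq] at hy ⊢
  linarith [sphDist_div_four_le_sphHatDist a x y]
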